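/- Let F be a field, let A be a Hopf algebra over F, and let V be a finite-dimensional (left) A-module. Equip A ⊗_F V with the A-module structure obtained by restricting the natural (A ⊗_F A)-module structure (where A acts on the first factor by left multiplication and acts on V via its given module structure) along the comultiplication Δ : A → A ⊗_F A, which is an F-algebra homomorphism. Then A ⊗_F V is isomorphic as an A-module to the direct sum A^{⊕ dim_F V} of dim_F V copies of the left regular A-module. -/

import Mathlib

/-- The `A`-module structure on `M ⊗[F] N`, for `A` a bialgebra over `F` and
`M`, `N` two `A`-modules: it is obtained by restricting the natural
`(A ⊗[F] A)`-module structure (acting factorwise) along the comultiplication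
`Δ : A → A ⊗[F] A`, which is an `F`-algebra homomorphism. -/
noncomputable def tensorModuleComul (F A M N : Type*) [CommSemiring F] [Semiring A]
    [Bialgebra F A]
    [AddCommMonoid M] [Module F M] [Module A M] [IsScalarTower F A M]
    [AddCommMonoid N] [Module F N] [Module A N] [IsScalarTower F A N] :
    Module A (TensorProduct F M N) :=
  Module.compHom _
    ((((Module.endTensorEndAlgHom (R := F) (S := F) (A := F) (M := M) (N := N)).comp
          (Algebra.TensorProduct.map (Algebra.lsmul F F M) (Algebra.lsmul F F N))).comp
        (Bialgebra.comulAlgHom F A)).toRingHom)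

/-!
The map `a ⊗ v ↦ ∑ a₍₁₎ ⊗ a₍₂₎ • v` sends left multiplication on the first factor to the diagonal
action. It belongs to a family: for a coalgebra `C`, every linear map `f : C → End V` gives an
endomorphism `c ⊗ v ↦ ∑ c₍₁₎ ⊗ f c₍₂₎ v` of `C ⊗ V`, and by coassociativity these compose as the
maps `f` convolve. The action map of a Hopf algebra is convolution invertible, with inverse its
composite with the antipode, so the map above is bijective. Its source, with `A` acting on the
first factor only, is free over `A` on any basis of `V`.
-/

open TensorProduct Coalgebra WithConv

section ConvolutionTwist

variable {R C V : Type*} [CommSemiring R] [AddCommMonoid C] [Module R C] [Coalgebra R C]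
  [AddCommMonoid V] [Module R V]

/-- The endomorphism `c ⊗ v ↦ ∑ c₍₁₎ ⊗ f c₍₂₎ v` of `C ⊗ V` attached to a linear map
`f : C → End V`; it is used to untwist the diagonal action. The argument lives in `WithConv`
because composition of these endomorphisms is convolution of the maps. -/
noncomputable def convTwist (f : WithConv (C →ₗ[R] Module.End R V)) : Module.End R (C ⊗[R] V) :=
  (lift f.ofConv).lTensor C ∘ₗ (TensorProduct.assoc R C C V).toLinearMap ∘ₗ comul.rTensor V

theorem convTwist_tmul (f : WithConv (C →ₗ[R] Module.End R V)) (c : C) (v : V) :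
    convTwist f (c ⊗ₜ v) = (f.ofConv.flip v).lTensor C (comul c) := by
  have lTensor_lift_assoc_tmul (t : C ⊗[R] C) :
      (lift f.ofConv).lTensor C (TensorProduct.assoc R C C V (t ⊗ₜ v)) =
        (f.ofConv.flip v).lTensor C t := by
    induction t with
    | zero => simp
    | tmul c₁ c₂ => simp
    | add s t hs ht => simp only [add_tmul, map_add, hs, ht]
  exact lTensor_lift_assoc_tmul (comul c)

theorem convTwist_comp_lTensor {W : Type*} [AddCommMonoid W] [Module R W]
    (f : WithConv (C →ₗ[R] Module.End R V)) (g : W →ₗ[R] V) :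
    convTwist f ∘ₗ g.lTensor C =
      (lift f.ofConv ∘ₗ g.lTensor C).lTensor C ∘ₗ
        (TensorProduct.assoc R C C W).toLinearMap ∘ₗ comul.rTensor W := by
  rw [convTwist, LinearMap.comp_assoc, LinearMap.comp_assoc, LinearMap.rTensor_comp_lTensor,
    ← LinearMap.lTensor_comp_rTensor, LinearMap.lTensor_tensor, LinearMap.lTensor_comp]
  ext
  simp

theorem flip_convOne (v : V) :
    (1 : WithConv (C →ₗ[R] Module.End R V)).ofConv.flip v =
      LinearMap.toSpanSingleton R V v ∘ₗ counit := by
  ext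
  simp

theorem flip_convMul (f g : WithConv (C →ₗ[R] Module.End R V)) (v : V) :
    (f * g).ofConv.flip v = lift f.ofConv ∘ₗ (g.ofConv.flip v).lTensor C ∘ₗ comul := by
  have mul'_map_apply (t : C ⊗[R] C) :
      LinearMap.mul' R (Module.End R V) (map f.ofConv g.ofConv t) v =
        lift f.ofConv ((g.ofConv.flip v).lTensor C t) := by
    induction t with
    | zero => simp
    | tmul c₁ c₂ => simp
    | add s t hs ht => simp only [map_add, LinearMap.add_apply, hs, ht]
  ext c
  exact mul'_map_apply (comul c)

theorem convTwist_one : convTwist (1 : WithConv (C →ₗ[R] Module.End R V)) = 1 := by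
  ext c v
  simp [convTwist_tmul, flip_convOne, LinearMap.lTensor_comp_apply]

theorem convTwist_mul (f g : WithConv (C →ₗ[R] Module.End R V)) :
    convTwist (f * g) = convTwist f * convTwist g := by
  refine TensorProduct.ext' fun c v ↦ Eq.symm ?_
  calc
    convTwist f (convTwist g (c ⊗ₜ v))
      = (convTwist f ∘ₗ (g.ofConv.flip v).lTensor C) (comul c) := by
        rw [convTwist_tmul g, LinearMap.comp_apply]
    _ = (lift f.ofConv ∘ₗ (g.ofConv.flip v).lTensor C).lTensor C
          (comul.lTensor C (comul c)) := by
        rw [convTwist_comp_lTensor, ← coassoc_apply]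
        rfl
    _ = ((f * g).ofConv.flip v).lTensor C (comul c) := by
        rw [flip_convMul, ← LinearMap.lTensor_comp_apply, LinearMap.comp_assoc]
    _ = convTwist (f * g) (c ⊗ₜ v) := (convTwist_tmul _ _ _).symm

variable (R C V) in
/-- `convTwist` as a homomorphism from the convolution monoid of maps `C → End V` to the
composition monoid `End (C ⊗ V)`, used to transport convolution inverses. -/
noncomputable def convTwistHom :
    WithConv (C →ₗ[R] Module.End R V) →* Module.End R (C ⊗[R] V) where
  toFun := convTwist
  map_one' := convTwist_one
  map_mul' := convTwist_mul

end ConvolutionTwist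

section AntipodeInverse

variable {R A B : Type*} [CommSemiring R] [Semiring A] [Semiring B] [Algebra R B]

theorem algHom_comp_convOne {C : Type*} [AddCommMonoid C] [Module R C] [Coalgebra R C]
    [Algebra R A] (φ : A →ₐ[R] B) :
    φ.toLinearMap ∘ₗ (1 : WithConv (C →ₗ[R] A)).ofConv = (1 : WithConv (C →ₗ[R] B)).ofConv := by
  ext
  simp

/-- An algebra homomorphism out of a Hopf algebra as a unit of the convolution monoid, its
inverse being the composite with the antipode; for the action `A → End V` this is what makes
`convTwist` invertible. -/
noncomputable def algHomConvUnit [HopfAlgebra R A] (φ : A →ₐ[R] B) :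
    (WithConv (A →ₗ[R] B))ˣ where
  val := toConv φ.toLinearMap
  inv := toConv (φ.toLinearMap ∘ₗ HopfAlgebra.antipode R)
  val_inv := by
    apply WithConv.ext
    rw [← algHom_comp_convOne φ, ← LinearMap.id_mul_antipode,
      LinearMap.algHom_comp_convMul_distrib, LinearMap.comp_id]
  inv_val := by
    apply WithConv.ext
    rw [← algHom_comp_convOne φ, ← LinearMap.antipode_mul_id,
      LinearMap.algHom_comp_convMul_distrib, LinearMap.comp_id]

end AntipodeInverse

section DiagonalAction

/-- The representation of `A` on `M ⊗ N` through the comultiplication, as an algebra homomorphism: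
the action of `tensorModuleComul`, kept apart from the action of `A` on the first factor, which is
the module instance on `M ⊗ N`. -/
noncomputable def diagonalAction (R A M N : Type*) [CommSemiring R] [Semiring A] [Bialgebra R A]
    [AddCommMonoid M] [Module R M] [Module A M] [IsScalarTower R A M]
    [AddCommMonoid N] [Module R N] [Module A N] [IsScalarTower R A N] :
    A →ₐ[R] Module.End R (M ⊗[R] N) :=
  (Module.endTensorEndAlgHom.comp
    (Algebra.TensorProduct.map (Algebra.lsmul R R M) (Algebra.lsmul R R N))).comp
      (Bialgebra.comulAlgHom R A)

variable {R A V : Type*} [CommSemiring R] [Semiring A]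
  [AddCommMonoid V] [Module R V] [Module A V]

theorem convTwist_lsmul_tmul [Bialgebra R A] [IsScalarTower R A V] (a : A) (v : V) :
    convTwist (toConv (Algebra.lsmul R R V).toLinearMap) (a ⊗ₜ v) =
      diagonalAction R A A V a (1 ⊗ₜ v) := by
  have lTensor_flip_lsmul (t : A ⊗[R] A) :
      ((Algebra.lsmul R R V).toLinearMap.flip v).lTensor A t =
        Module.endTensorEndAlgHom (S := R) (A := R) (Algebra.TensorProduct.map
          (Algebra.lsmul R R A) (Algebra.lsmul R R V) t) ((1 : A) ⊗ₜ[R] v) := by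
    induction t with
    | zero => simp
    | tmul a₁ a₂ => simp [Module.endTensorEndAlgHom_apply]
    | add s t hs ht => simp only [map_add, LinearMap.add_apply, hs, ht]
  rw [convTwist_tmul]
  exact lTensor_flip_lsmul (comul a)

theorem convTwist_lsmul_smul [Bialgebra R A] [IsScalarTower R A V] (b : A) (x : A ⊗[R] V) :
    convTwist (toConv (Algebra.lsmul R R V).toLinearMap) (b • x) =
      diagonalAction R A A V b (convTwist (toConv (Algebra.lsmul R R V).toLinearMap) x) := by
  induction x with
  | zero => simp
  | tmul a v =>
    rw [smul_tmul', smul_eq_mul, convTwist_lsmul_tmul, convTwist_lsmul_tmul, map_mul,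
      Module.End.mul_apply]
  | add x y hx hy => simp only [smul_add, map_add, hx, hy]

variable (R A V) in
/-- The untwisting isomorphism `a ⊗ v ↦ ∑ a₍₁₎ ⊗ a₍₂₎ • v` for a module over a Hopf algebra, from
`A ⊗ V` with `A` acting on the first factor to `A ⊗ V` with the diagonal action. Only its
`R`-linear structure is bundled, as the two `A`-module structures live on the same type. -/
noncomputable def untwist [HopfAlgebra R A] [IsScalarTower R A V] : A ⊗[R] V ≃ₗ[R] A ⊗[R] V :=
  LinearMap.GeneralLinearGroup.generalLinearEquiv R _
    (Units.map (convTwistHom R A V) (algHomConvUnit (Algebra.lsmul R R V)))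

theorem untwist_smul [HopfAlgebra R A] [IsScalarTower R A V] (b : A) (x : A ⊗[R] V) :
    untwist R A V (b • x) = diagonalAction R A A V b (untwist R A V x) :=
  convTwist_lsmul_smul b x

theorem untwist_symm_diagonalAction [HopfAlgebra R A] [IsScalarTower R A V] (b : A) (x : A ⊗[R] V) :
    (untwist R A V).symm (diagonalAction R A A V b x) = b • (untwist R A V).symm x := by
  rw [LinearEquiv.symm_apply_eq, untwist_smul, LinearEquiv.apply_symm_apply]

end DiagonalAction

theorem stmt12_general {R A V ι : Type*} [CommSemiring R] [Semiring A] [HopfAlgebra R A]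
    [AddCommMonoid V] [Module R V] [Module A V] [IsScalarTower R A V] (v : Module.Basis ι R V) :
    letI : Module A (A ⊗[R] V) := tensorModuleComul R A A V
    Nonempty (A ⊗[R] V ≃ₗ[A] (ι →₀ A)) :=
  let freeEquiv := (Algebra.TensorProduct.basis A v).repr
  let e : A ⊗[R] V ≃+ (ι →₀ A) := (untwist R A V).symm.toAddEquiv.trans freeEquiv.toAddEquiv
  have map_diagonalAction (b : A) (x : A ⊗[R] V) : e (diagonalAction R A A V b x) = b • e x :=
    (congrArg freeEquiv (untwist_symm_diagonalAction b x)).trans (freeEquiv.map_smul b _)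
  let : Module A (A ⊗[R] V) := tensorModuleComul R A A V
  ⟨e.toLinearEquiv map_diagonalAction⟩

/-- Lemma 2.6(ii) of the paper. For a Hopf algebra `A` over a
field `F` and a finite-dimensional `A`-module `V`, the tensor product
`A ⊗[F] V` (with `A` acting via the comultiplication, on the left factor by
left multiplication and on `V` by its module structure) is isomorphic as an
`A`-module to `A^{⊕ dim_F V}`. -/
theorem stmt12 (F : Type*) [Field F] (A : Type*) [Ring A] [HopfAlgebra F A]
    (V : Type*) [AddCommGroup V] [Module F V] [Module A V] [IsScalarTower F A V]
    [FiniteDimensional F V] :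
    letI : Module A (TensorProduct F A V) := tensorModuleComul F A A V
    Nonempty ((TensorProduct F A V) ≃ₗ[A] (Fin (Module.finrank F V) → A)) := by
  let : Module A (TensorProduct F A V) := tensorModuleComul F A A V
  exact (stmt12_general (Module.finBasis F V)).map
    (·.trans (Finsupp.linearEquivFunOnFinite A A (Fin (Module.finrank F V))))
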